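/- Lemma 4, part (ii): Let N, K, F be positive integers, M ≥ 0 a real, W_1,…,W_N i.i.d. uniform on {1,…,2^F}, V_k = g_k(W_1,…,W_N) for k ∈ {1,…,K} where each g_k maps into a set of size at most ⌊2^{F·M}⌋, and let D = (D_1,…,D_K) be uniformly distributed on {1,…,N}^K, independent of (W_1,…,W_N). Fix ℓ ∈ {1,…,K} and for k ∈ {1,…,ℓ} define β_k := (1/F)·I(W_{D_k}; V_1,…,V_k | W_{D_1},…,W_{D_{k−1}}, D). Then ∑_{k=1}^{ℓ} β_k ≤ N·(1 − (1 − 1/N)^ℓ)·(ℓ·M/N). -/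

import Mathlib

/-- Probability that the discrete random variable `X` (on finite space `Ω` with
probability mass function `p`) takes the value `x`. -/
noncomputable def pr {Ω : Type*} [Fintype Ω] {α : Type*} [DecidableEq α]
    (p : Ω → ℝ) (X : Ω → α) (x : α) : ℝ :=
  ∑ ω ∈ Finset.univ.filter (fun ω => X ω = x), p ω

/-- Shannon entropy (base 2) of the discrete random variable `X`. -/
noncomputable def ent {Ω : Type*} [Fintype Ω] {α : Type*} [DecidableEq α]
    (p : Ω → ℝ) (X : Ω → α) : ℝ :=
  -∑ x ∈ Finset.univ.image X, pr p X x * Real.logb 2 (pr p X x)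

/-- Conditional mutual information `I(X;Y|Z) = H(X,Z) + H(Y,Z) − H(X,Y,Z) − H(Z)`
(base 2). -/
noncomputable def cmi {Ω : Type*} [Fintype Ω] {α β γ : Type*}
    [DecidableEq α] [DecidableEq β] [DecidableEq γ]
    (p : Ω → ℝ) (X : Ω → α) (Y : Ω → β) (Z : Ω → γ) : ℝ :=
  ent p (fun ω => (X ω, Z ω)) + ent p (fun ω => (Y ω, Z ω))
    - ent p (fun ω => (X ω, Y ω, Z ω)) - ent p Z

/-! Conditionally on `D = d` and with `v` standing for the caches `V_1, …, V_ℓ`, data processing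
and the chain rule bound the `k`-th conditional mutual information by the increment
`G(S_k) - G(S_{k-1})`, where `S_k = {d_1, …, d_k}` and `G(S) = I(v; W_S)`. Hence the sum over `k`
is at most `G(S_ℓ)`. Independence of the messages makes `G` supermodular, so `G` is dominated by an
additive set function with the same total mass `G({1, …, N}) = H(v) ≤ ℓFM`. Averaging over `d`
multiplies that mass by the probability `1 - (1 - 1/N)^ℓ` that a given message is requested. -/

section Entropy

variable {Ω α β γ δ : Type*} [Fintype Ω] [DecidableEq α] [DecidableEq β] [DecidableEq γ]
  [DecidableEq δ] {p : Ω → ℝ}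

lemma pr_nonneg (hp : ∀ ω, 0 ≤ p ω) (X : Ω → α) (x : α) : 0 ≤ pr p X x :=
  Finset.sum_nonneg fun ω _ => hp ω

lemma pr_apply_pos (hp : ∀ ω, 0 ≤ p ω) (X : Ω → α) {ω : Ω} (hω : 0 < p ω) :
    0 < pr p X (X ω) :=
  Finset.sum_pos' (fun ω' _ => hp ω') ⟨ω, by simp, hω⟩

lemma sum_mul_comp_eq_sum_pr_mul (p : Ω → ℝ) {X : Ω → α} {T : Finset α} (hT : ∀ ω, X ω ∈ T)
    (f : α → ℝ) : ∑ ω, p ω * f (X ω) = ∑ x ∈ T, pr p X x * f x := by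
  rw [← Finset.sum_fiberwise_of_maps_to fun ω _ => hT ω]
  refine Finset.sum_congr rfl fun x _ => ?_
  rw [pr, Finset.sum_mul]
  exact Finset.sum_congr rfl fun ω hω => by rw [(Finset.mem_filter.1 hω).2]

lemma sum_pr_eq_sum (p : Ω → ℝ) {X : Ω → α} {T : Finset α} (hT : ∀ ω, X ω ∈ T) :
    ∑ x ∈ T, pr p X x = ∑ ω, p ω := by
  simpa only [mul_one] using (sum_mul_comp_eq_sum_pr_mul p hT fun _ => 1).symm

lemma sum_pr_prodMk_eq_pr (p : Ω → ℝ) {X : Ω → α} {T : Finset α} (hT : ∀ ω, X ω ∈ T)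
    (Y : Ω → β) (y : β) : ∑ x ∈ T, pr p (fun ω => (X ω, Y ω)) (x, y) = pr p Y y := by
  simp only [pr, Prod.mk.injEq, and_comm (b := Y _ = y), ← Finset.filter_filter]
  exact Finset.sum_fiberwise_of_maps_to (fun ω _ => hT ω) p

lemma ent_eq_neg_sum_logb_pr (p : Ω → ℝ) (X : Ω → α) :
    ent p X = -∑ ω, p ω * Real.logb 2 (pr p X (X ω)) := by
  rw [ent, sum_mul_comp_eq_sum_pr_mul p (T := Finset.univ.image X) (by simp)
    fun x => Real.logb 2 (pr p X x)]

lemma pr_congr (p : Ω → ℝ) {X : Ω → α} {Y : Ω → β} (h : ∀ ω ω', X ω = X ω' ↔ Y ω = Y ω')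
    (ω : Ω) : pr p X (X ω) = pr p Y (Y ω) := by
  simp only [pr, h]

lemma ent_congr (p : Ω → ℝ) {X : Ω → α} {Y : Ω → β} (h : ∀ ω ω', X ω = X ω' ↔ Y ω = Y ω') :
    ent p X = ent p Y := by
  simp only [ent_eq_neg_sum_logb_pr, pr_congr p h]

lemma ent_of_subsingleton [Subsingleton α] (hp1 : ∑ ω, p ω = 1) (X : Ω → α) : ent p X = 0 := by
  have hpr (ω : Ω) : pr p X (X ω) = 1 := by
    rw [pr, Finset.filter_true_of_mem fun ω' _ => Subsingleton.elim (X ω') (X ω), hp1]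
  simp only [ent_eq_neg_sum_logb_pr, hpr, Real.logb_one, mul_zero, Finset.sum_const_zero, neg_zero]

lemma sum_mul_logb_nonpos (hp : ∀ ω, 0 ≤ p ω) {r : Ω → ℝ} (hr : ∀ ω, 0 < p ω → 0 < r ω)
    (hsum : ∑ ω, p ω * r ω ≤ ∑ ω, p ω) : ∑ ω, p ω * Real.logb 2 (r ω) ≤ 0 := by
  have hterm (ω : Ω) : p ω * Real.log (r ω) ≤ p ω * r ω - p ω := by
    rcases (hp ω).eq_or_lt with h | h
    · simp [← h]
    · nlinarith [Real.log_le_sub_one_of_pos (hr ω h)]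
  have hlog : ∑ ω, p ω * Real.log (r ω) ≤ 0 := calc
    _ ≤ ∑ ω, (p ω * r ω - p ω) := Finset.sum_le_sum fun ω _ => hterm ω
    _ ≤ 0 := by rw [Finset.sum_sub_distrib]; linarith
  simp only [Real.logb, ← mul_div_assoc, ← Finset.sum_div]
  exact div_nonpos_of_nonpos_of_nonneg hlog (Real.log_nonneg one_le_two)

lemma ent_le_logb_card [Fintype α] (hp : ∀ ω, 0 ≤ p ω) (hp1 : ∑ ω, p ω = 1) (X : Ω → α) :
    ent p X ≤ Real.logb 2 (Fintype.card α) := by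
  have hcard (ω : Ω) : (0 : ℝ) < Fintype.card α :=
    Nat.cast_pos.2 (Fintype.card_pos_iff.2 ⟨X ω⟩)
  have hsum : ∑ ω, p ω * (pr p X (X ω) * Fintype.card α)⁻¹ ≤ ∑ ω, p ω := calc
    _ = ∑ x, pr p X x * (pr p X x * Fintype.card α)⁻¹ :=
      sum_mul_comp_eq_sum_pr_mul p (fun ω => Finset.mem_univ (X ω))
        fun x => (pr p X x * Fintype.card α)⁻¹
    _ ≤ ∑ _x : α, (Fintype.card α : ℝ)⁻¹ := by
      refine Finset.sum_le_sum fun x _ => ?_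
      rw [mul_inv, ← mul_assoc]
      exact mul_le_of_le_one_left (by positivity) (mul_inv_le_one)
    _ ≤ ∑ ω, p ω := by
      rw [hp1, Finset.sum_const, Finset.card_univ, nsmul_eq_mul]
      exact mul_inv_le_one
  have hgibbs := sum_mul_logb_nonpos hp
    (fun ω hω => inv_pos.2 (mul_pos (pr_apply_pos hp X hω) (hcard ω))) hsum
  have hsplit : ∑ ω, p ω * Real.logb 2 (pr p X (X ω) * Fintype.card α)⁻¹ =
      ent p X - Real.logb 2 (Fintype.card α) := by
    rw [ent_eq_neg_sum_logb_pr, ← one_mul (Real.logb 2 (Fintype.card α)), ← hp1, Finset.sum_mul,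
      ← Finset.sum_neg_distrib, ← Finset.sum_sub_distrib]
    refine Finset.sum_congr rfl fun ω _ => ?_
    rcases (hp ω).eq_or_lt with h | h
    · simp [← h]
    · rw [Real.logb_inv, Real.logb_mul (pr_apply_pos hp X h).ne' (hcard ω).ne']
      ring
  linarith

lemma ent_pi_le {κ : Type*} [Fintype κ] {V : κ → Type*} [∀ k, Fintype (V k)]
    [∀ k, DecidableEq (V k)] (hp : ∀ ω, 0 ≤ p ω) (hp1 : ∑ ω, p ω = 1) {B : ℝ}
    (hV : ∀ k, (Fintype.card (V k) : ℝ) ≤ 2 ^ B) (X : Ω → ∀ k, V k) :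
    ent p X ≤ Fintype.card κ * B := by
  classical
  obtain ⟨ω, -, -⟩ := Finset.exists_ne_zero_of_sum_ne_zero (hp1.trans_ne one_ne_zero)
  have hpos (k : κ) : (0 : ℝ) < Fintype.card (V k) :=
    Nat.cast_pos.2 (Fintype.card_pos_iff.2 ⟨X ω k⟩)
  calc ent p X ≤ Real.logb 2 (Fintype.card (∀ k, V k)) := ent_le_logb_card hp hp1 X
    _ = ∑ k, Real.logb 2 (Fintype.card (V k)) := by
      rw [Fintype.card_pi, Nat.cast_prod, Real.logb_prod _ _ fun k _ => (hpos k).ne']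
    _ ≤ ∑ _k : κ, B := Finset.sum_le_sum fun k _ =>
      (Real.logb_le_iff_le_rpow one_lt_two (hpos k)).2 (hV k)
    _ = Fintype.card κ * B := by rw [Finset.sum_const, Finset.card_univ, nsmul_eq_mul]

lemma sum_pr_mul_pr_div_le (hp : ∀ ω, 0 ≤ p ω) (X : Ω → α) (Y : Ω → β) (Z : Ω → γ) :
    ∑ ω, p ω * (pr p (fun ω => (X ω, Z ω)) (X ω, Z ω) * pr p (fun ω => (Y ω, Z ω)) (Y ω, Z ω) /
      (pr p (fun ω => (X ω, Y ω, Z ω)) (X ω, Y ω, Z ω) * pr p Z (Z ω))) ≤ ∑ ω, p ω := by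
  set a := pr p Z
  set b := pr p fun ω => (X ω, Z ω)
  set c := pr p fun ω => (Y ω, Z ω)
  set e := pr p fun ω => (X ω, Y ω, Z ω)
  let S := Finset.univ.image X
  let T := Finset.univ.image Y
  let U := Finset.univ.image Z
  have hS (ω : Ω) : X ω ∈ S := Finset.mem_image_of_mem X (Finset.mem_univ ω)
  have hT (ω : Ω) : Y ω ∈ T := Finset.mem_image_of_mem Y (Finset.mem_univ ω)
  have hU (ω : Ω) : Z ω ∈ U := Finset.mem_image_of_mem Z (Finset.mem_univ ω)
  calc ∑ ω, p ω * (b (X ω, Z ω) * c (Y ω, Z ω) / (e (X ω, Y ω, Z ω) * a (Z ω)))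
    _ = ∑ t ∈ S ×ˢ T ×ˢ U, e t * (b (t.1, t.2.2) * c t.2 / (e t * a t.2.2)) :=
      sum_mul_comp_eq_sum_pr_mul p (X := fun ω => (X ω, Y ω, Z ω))
        (fun ω => Finset.mk_mem_product (hS ω) (Finset.mk_mem_product (hT ω) (hU ω)))
        fun t => b (t.1, t.2.2) * c t.2 / (e t * a t.2.2)
    _ ≤ ∑ t ∈ S ×ˢ T ×ˢ U, b (t.1, t.2.2) * c t.2 / a t.2.2 := by
      refine Finset.sum_le_sum fun t _ => ?_
      have hnonneg : 0 ≤ b (t.1, t.2.2) * c t.2 / a t.2.2 := div_nonneg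
        (mul_nonneg (pr_nonneg hp _ _) (pr_nonneg hp _ _)) (pr_nonneg hp _ _)
      rcases eq_or_ne (e t) 0 with h | h
      · rwa [h, zero_mul]
      · rw [← mul_div_assoc, mul_div_mul_left _ _ h]
    _ = ∑ z ∈ U, ∑ y ∈ T, ∑ x ∈ S, b (x, z) * c (y, z) / a z := by
      rw [Finset.sum_product_right, Finset.sum_product_right]
    _ = ∑ z ∈ U, a z := by
      refine Finset.sum_congr rfl fun z _ => ?_
      simp only [← Finset.sum_div, ← Finset.sum_mul, ← Finset.mul_sum]
      rw [sum_pr_prodMk_eq_pr p hS Z z, sum_pr_prodMk_eq_pr p hT Z z]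
      exact mul_self_div_self (a z)
    _ = ∑ ω, p ω := sum_pr_eq_sum p hU

theorem cmi_nonneg (hp : ∀ ω, 0 ≤ p ω) (X : Ω → α) (Y : Ω → β) (Z : Ω → γ) :
    0 ≤ cmi p X Y Z := by
  have hXZ {ω} (hω : 0 < p ω) := pr_apply_pos hp (fun ω => (X ω, Z ω)) hω
  have hYZ {ω} (hω : 0 < p ω) := pr_apply_pos hp (fun ω => (Y ω, Z ω)) hω
  have hXYZ {ω} (hω : 0 < p ω) := pr_apply_pos hp (fun ω => (X ω, Y ω, Z ω)) hω
  have hZ {ω} (hω : 0 < p ω) := pr_apply_pos hp Z hω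
  have hgibbs := sum_mul_logb_nonpos hp
    (fun ω hω => div_pos (mul_pos (hXZ hω) (hYZ hω)) (mul_pos (hXYZ hω) (hZ hω)))
    (sum_pr_mul_pr_div_le hp X Y Z)
  refine (neg_nonneg.2 hgibbs).trans_eq ?_
  simp only [cmi, ent_eq_neg_sum_logb_pr, ← Finset.sum_neg_distrib, ← Finset.sum_add_distrib,
    ← Finset.sum_sub_distrib]
  refine Finset.sum_congr rfl fun ω _ => ?_
  rcases (hp ω).eq_or_lt with h | h
  · simp [← h]
  · rw [Real.logb_div (mul_pos (hXZ h) (hYZ h)).ne' (mul_pos (hXYZ h) (hZ h)).ne',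
      Real.logb_mul (hXZ h).ne' (hYZ h).ne', Real.logb_mul (hXYZ h).ne' (hZ h).ne']
    ring

theorem cmi_le_cmi_of_factors (hp : ∀ ω, 0 ≤ p ω) (X : Ω → α) {Y : Ω → β} {Y' : Ω → δ}
    (h : ∀ ω ω', Y ω = Y ω' → Y' ω = Y' ω') (Z : Ω → γ) : cmi p X Y' Z ≤ cmi p X Y Z := by
  have hnonneg := cmi_nonneg hp X Y fun ω => (Y' ω, Z ω)
  have hY : ent p (fun ω => (Y ω, Y' ω, Z ω)) = ent p (fun ω => (Y ω, Z ω)) :=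
    ent_congr p fun ω ω' => by simp only [Prod.mk.injEq]; have := h ω ω'; tauto
  have hXY : ent p (fun ω => (X ω, Y ω, Y' ω, Z ω)) = ent p (fun ω => (X ω, Y ω, Z ω)) :=
    ent_congr p fun ω ω' => by simp only [Prod.mk.injEq]; have := h ω ω'; tauto
  rw [cmi, hY, hXY] at hnonneg
  rw [cmi, cmi]
  linarith

/-- Mutual information `I(X;Y) = H(X) + H(Y) − H(X,Y)` (base 2). -/
noncomputable def mi (p : Ω → ℝ) (X : Ω → α) (Y : Ω → β) : ℝ :=
  ent p X + ent p Y - ent p fun ω => (X ω, Y ω)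

lemma mi_congr_right (p : Ω → ℝ) (X : Ω → α) {Y : Ω → β} {Y' : Ω → γ}
    (h : ∀ ω ω', Y ω = Y ω' ↔ Y' ω = Y' ω') : mi p X Y = mi p X Y' := by
  rw [mi, mi, ent_congr p h, ent_congr p (X := fun ω => (X ω, Y ω)) (Y := fun ω => (X ω, Y' ω))]
  simp only [Prod.mk.injEq, h, implies_true]

lemma mi_of_subsingleton [Subsingleton β] (hp1 : ∑ ω, p ω = 1) (X : Ω → α) (Y : Ω → β) :
    mi p X Y = 0 := by
  rw [mi, ent_of_subsingleton hp1 Y, ent_congr p (X := fun ω => (X ω, Y ω)) (Y := X)]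
  · ring
  · intro ω ω'
    rw [Prod.mk.injEq, and_iff_left (Subsingleton.elim (Y ω) (Y ω'))]

lemma mi_of_injective (p : Ω → ℝ) (X : Ω → α) {Y : Ω → β} (hY : Function.Injective Y) :
    mi p X Y = ent p X := by
  rw [mi, ent_congr p (X := fun ω => (X ω, Y ω)) (Y := Y)]
  · ring
  · intro ω ω'
    simpa only [Prod.mk.injEq, and_iff_right_iff_imp] using fun h => congrArg X (hY h)

lemma cmi_eq_mi_sub_mi (p : Ω → ℝ) (X : Ω → α) (Y : Ω → β) (Z : Ω → γ) :
    cmi p X Y Z = mi p Y (fun ω => (X ω, Z ω)) - mi p Y Z := by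
  have hswap : ent p (fun ω => (X ω, Y ω, Z ω)) = ent p (fun ω => (Y ω, X ω, Z ω)) :=
    ent_congr p fun _ _ => by simp only [Prod.mk.injEq, and_left_comm]
  rw [cmi, mi, mi, hswap]
  ring

end Entropy

section Independent

variable {A B σ τ υ : Type*} [Fintype A] [Fintype B] [DecidableEq B] [DecidableEq σ]
  [DecidableEq τ] [DecidableEq υ] {p : A → ℝ} {q : B → ℝ}

lemma pr_prodMk_snd (p : A → ℝ) (q : B → ℝ) (X : A × B → σ) (x : σ) (b : B) :
    pr (fun ω : A × B => p ω.1 * q ω.2) (fun ω => (X ω, ω.2)) (x, b) =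
      q b * pr p (fun a => X (a, b)) x := by
  simp only [pr, Finset.sum_filter, Finset.mul_sum]
  rw [Fintype.sum_prod_type_right, Fintype.sum_eq_single b fun b' hb' => by simp [hb']]
  simp only [Prod.mk.injEq, and_true, mul_ite, mul_zero, mul_comm]

lemma ent_prodMk_snd (hp : ∀ a, 0 ≤ p a) (hp1 : ∑ a, p a = 1) (q : B → ℝ) (X : A × B → σ) :
    ent (fun ω : A × B => p ω.1 * q ω.2) (fun ω => (X ω, ω.2)) =
      ∑ b, q b * ent p (fun a => X (a, b)) - ∑ b, q b * Real.logb 2 (q b) := by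
  simp only [ent_eq_neg_sum_logb_pr, pr_prodMk_snd]
  rw [Fintype.sum_prod_type_right, ← Finset.sum_neg_distrib, ← Finset.sum_sub_distrib]
  refine Finset.sum_congr rfl fun b _ => ?_
  have hterm (a : A) : p a * q b * Real.logb 2 (q b * pr p (fun a => X (a, b)) (X (a, b))) =
      p a * (q b * Real.logb 2 (q b)) +
        q b * (p a * Real.logb 2 (pr p (fun a => X (a, b)) (X (a, b)))) := by
    rcases (hp a).eq_or_lt with ha | ha
    · simp [← ha]
    rcases eq_or_ne (q b) 0 with hb | hb
    · simp [hb]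
    rw [Real.logb_mul hb (pr_apply_pos hp _ ha).ne']
    ring
  simp only [hterm, Finset.sum_add_distrib, ← Finset.sum_mul, ← Finset.mul_sum, hp1]
  ring

theorem cmi_prodMk_snd (hp : ∀ a, 0 ≤ p a) (hp1 : ∑ a, p a = 1) (q : B → ℝ)
    (X : A × B → σ) (Y : A × B → τ) (Z : A × B → υ) :
    cmi (fun ω : A × B => p ω.1 * q ω.2) X Y (fun ω => (Z ω, ω.2)) =
      ∑ b, q b * cmi p (fun a => X (a, b)) (fun a => Y (a, b)) (fun a => Z (a, b)) := by
  let P : A × B → ℝ := fun ω => p ω.1 * q ω.2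
  have hXZ : ent P (fun ω => (X ω, Z ω, ω.2)) = ent P (fun ω => ((X ω, Z ω), ω.2)) :=
    ent_congr P fun _ _ => by simp only [Prod.mk.injEq, and_assoc]
  have hYZ : ent P (fun ω => (Y ω, Z ω, ω.2)) = ent P (fun ω => ((Y ω, Z ω), ω.2)) :=
    ent_congr P fun _ _ => by simp only [Prod.mk.injEq, and_assoc]
  have hXYZ : ent P (fun ω => (X ω, Y ω, Z ω, ω.2)) = ent P (fun ω => ((X ω, Y ω, Z ω), ω.2)) :=
    ent_congr P fun _ _ => by simp only [Prod.mk.injEq, and_assoc]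
  rw [cmi, hXZ, hYZ, hXYZ]
  simp only [P, ent_prodMk_snd hp hp1, cmi, mul_sub, mul_add, Finset.sum_sub_distrib,
    Finset.sum_add_distrib]
  ring

end Independent

section ProductMass

/-- The joint mass function of independent random variables, the `i`-th of which has mass
function `q i`. -/
noncomputable def productMass {ι : Type*} [Fintype ι] {α : ι → Type*} (q : ∀ i, α i → ℝ)
    (w : ∀ i, α i) : ℝ :=
  ∏ i, q i (w i)

/-- The uniform mass function on a finite type. -/
noncomputable def uniformMass (α : Type*) [Fintype α] (_ : α) : ℝ :=
  1 / Fintype.card α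

lemma uniformMass_nonneg {α : Type*} [Fintype α] (x : α) : 0 ≤ uniformMass α x :=
  one_div_nonneg.2 (Nat.cast_nonneg _)

lemma sum_uniformMass (α : Type*) [Fintype α] [Nonempty α] : ∑ x, uniformMass α x = 1 := by
  simp [uniformMass]

lemma uniformMass_mul_uniformMass (α β : Type*) [Fintype α] [Fintype β] :
    (fun ω : α × β => uniformMass α ω.1 * uniformMass β ω.2) = uniformMass (α × β) := by
  ext ω
  simp only [uniformMass, one_div_mul_one_div, Fintype.card_prod, Nat.cast_mul]

lemma restrict_eq_restrict_iff {ι : Type*} {α : ι → Type*} {S : Finset ι} {w w' : ∀ i, α i} :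
    S.restrict w = S.restrict w' ↔ ∀ i ∈ S, w i = w' i := by
  simp only [funext_iff, Finset.restrict, Subtype.forall]

lemma productMass_nonneg {ι : Type*} [Fintype ι] {α : ι → Type*} {q : ∀ i, α i → ℝ}
    (hq : ∀ i x, 0 ≤ q i x) (w : ∀ i, α i) : 0 ≤ productMass q w :=
  Finset.prod_nonneg fun i _ => hq i (w i)

variable {ι : Type*} [Fintype ι] [DecidableEq ι]

lemma productMass_uniformMass (α : ι → Type*) [∀ i, Fintype (α i)] :
    productMass (fun i => uniformMass (α i)) = uniformMass (∀ i, α i) := by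
  ext w
  simp only [productMass, uniformMass, Finset.prod_div_distrib, Finset.prod_const_one,
    Fintype.card_pi, Nat.cast_prod]

variable {α : ι → Type*} {q : ∀ i, α i → ℝ}

lemma sum_piFinset_productMass (q : ∀ i, α i → ℝ) (t : ∀ i, Finset (α i)) :
    ∑ w ∈ Fintype.piFinset t, productMass q w = ∏ i, ∑ x ∈ t i, q i x :=
  (Finset.prod_univ_sum t q).symm

variable [∀ i, Fintype (α i)]

lemma sum_productMass (hq1 : ∀ i, ∑ x, q i x = 1) : ∑ w, productMass q w = 1 := by
  rw [← Fintype.piFinset_univ, sum_piFinset_productMass]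
  simp only [hq1, Finset.prod_const_one]

variable [∀ i, DecidableEq (α i)]

lemma pr_productMass_restrict (hq1 : ∀ i, ∑ x, q i x = 1) (S : Finset ι) (w : ∀ i, α i) :
    pr (productMass q) S.restrict (S.restrict w) = ∏ i ∈ S, q i (w i) := by
  have hfibre : (Finset.univ.filter fun w' : ∀ i, α i => S.restrict w' = S.restrict w) =
      Fintype.piFinset fun i => if i ∈ S then {w i} else Finset.univ := by
    ext w'
    simp only [Finset.mem_filter_univ, restrict_eq_restrict_iff, Fintype.mem_piFinset]
    refine forall_congr' fun i => ?_
    by_cases hi : i ∈ S <;> simp [hi]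
  rw [pr, hfibre, sum_piFinset_productMass, ← Fintype.prod_ite_mem S]
  refine Finset.prod_congr rfl fun i _ => ?_
  by_cases hi : i ∈ S <;> simp [hi, hq1]

lemma pr_productMass_eval (hq1 : ∀ i, ∑ x, q i x = 1) (i : ι) (w : ∀ i, α i) :
    pr (productMass q) (fun w => w i) (w i) = q i (w i) := by
  rw [pr_congr (productMass q) (X := fun w : ∀ i, α i => w i) (Y := ({i} : Finset ι).restrict)
    fun _ _ => by simp [restrict_eq_restrict_iff], pr_productMass_restrict hq1,
    Finset.prod_singleton]

theorem ent_productMass_restrict (hq1 : ∀ i, ∑ x, q i x = 1) (S : Finset ι) :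
    ent (productMass q) S.restrict = ∑ i ∈ S, ent (productMass q) fun w => w i := by
  simp only [ent_eq_neg_sum_logb_pr, pr_productMass_restrict hq1, pr_productMass_eval hq1,
    Finset.sum_neg_distrib]
  rw [Finset.sum_comm]
  congr! 2 with w
  rcases eq_or_ne (productMass q w) 0 with h | h
  · simp [h]
  · rw [Real.logb_prod _ _ fun i _ => Finset.prod_ne_zero_iff.1 h i (Finset.mem_univ i),
      Finset.mul_sum]

theorem mi_productMass_restrict_supermodular (hq : ∀ i x, 0 ≤ q i x) (hq1 : ∀ i, ∑ x, q i x = 1)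
    {ν : Type*} [DecidableEq ν] (v : (∀ i, α i) → ν) (S T : Finset ι) :
    mi (productMass q) v S.restrict + mi (productMass q) v T.restrict ≤
      mi (productMass q) v (S ∪ T).restrict + mi (productMass q) v (S ∩ T).restrict := by
  set p := productMass q
  have hmodular : ent p (S ∪ T).restrict + ent p (S ∩ T).restrict =
      ent p S.restrict + ent p T.restrict := by
    simp only [p, ent_productMass_restrict hq1, Finset.sum_union_inter]
  have hS : ent p (fun w => (S.restrict w, v w, (S ∩ T).restrict w)) =
      ent p fun w => (v w, S.restrict w) := by
    refine ent_congr p fun w w' => ?_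
    simp only [Prod.mk.injEq, restrict_eq_restrict_iff, Finset.mem_inter]
    grind
  have hT : ent p (fun w => (T.restrict w, v w, (S ∩ T).restrict w)) =
      ent p fun w => (v w, T.restrict w) := by
    refine ent_congr p fun w w' => ?_
    simp only [Prod.mk.injEq, restrict_eq_restrict_iff, Finset.mem_inter]
    grind
  have hST : ent p (fun w => (S.restrict w, T.restrict w, v w, (S ∩ T).restrict w)) =
      ent p fun w => (v w, (S ∪ T).restrict w) := by
    refine ent_congr p fun w w' => ?_
    simp only [Prod.mk.injEq, restrict_eq_restrict_iff, Finset.mem_inter, Finset.mem_union]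
    grind
  have hsubmodular := cmi_nonneg (p := p) (productMass_nonneg hq) S.restrict T.restrict
    fun w => (v w, (S ∩ T).restrict w)
  rw [cmi, hS, hT, hST] at hsubmodular
  simp only [mi]
  linarith

end ProductMass

section Supermodular

variable {ι : Type*} [DecidableEq ι] {G : Finset ι → ℝ}

-- For games in coalitional form this is Shapley's theorem that a convex game has a nonempty core:
-- `a` lists the marginal contributions of the elements in some order.
theorem exists_core_of_supermodular (hG : ∀ S T, G S + G T ≤ G (S ∪ T) + G (S ∩ T))
    (h0 : G ∅ = 0) (T : Finset ι) :
    ∃ a : ι → ℝ, ∑ i ∈ T, a i = G T ∧ ∀ S ⊆ T, G S ≤ ∑ i ∈ S, a i := by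
  induction T using Finset.induction_on with
  | empty => exact ⟨0, by simp [h0], fun S hS => by simp [Finset.subset_empty.1 hS, h0]⟩
  | insert i T hi ih =>
    obtain ⟨a, haT, haS⟩ := ih
    let a' := Function.update a i (G (insert i T) - G T)
    have hself : a' i = G (insert i T) - G T := Function.update_self i _ a
    have ha' {S : Finset ι} (hiS : i ∉ S) : ∑ j ∈ S, a' j = ∑ j ∈ S, a j :=
      Finset.sum_update_of_notMem hiS _ _
    have hinsert {S : Finset ι} (hiS : i ∉ S) :
        ∑ j ∈ insert i S, a' j = G (insert i T) - G T + ∑ j ∈ S, a j := by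
      rw [Finset.sum_insert hiS, ha' hiS, hself]
    refine ⟨a', by rw [hinsert hi, haT]; ring, fun S hS => ?_⟩
    by_cases hiS : i ∈ S
    · have hunion : S ∪ T = insert i T := by grind
      have hinter : S ∩ T = S.erase i := by grind
      have hsuper := hG S T
      rw [hunion, hinter] at hsuper
      rw [← Finset.insert_erase hiS, hinsert (Finset.notMem_erase i S), Finset.insert_erase hiS]
      linarith [haS (S.erase i) (Finset.subset_insert_iff.1 hS)]
    · rw [ha' hiS]
      exact haS S ((Finset.subset_insert_iff_of_notMem hiS).1 hS)

theorem sum_mul_le_of_supermodular [Fintype ι]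
    (hG : ∀ S T, G S + G T ≤ G (S ∪ T) + G (S ∩ T)) (h0 : G ∅ = 0)
    {Δ : Type*} [Fintype Δ] {μ : Δ → ℝ} (hμ : ∀ d, 0 ≤ μ d) (R : Δ → Finset ι) {c : ℝ}
    (hc : ∀ i, ∑ d with i ∈ R d, μ d = c) : ∑ d, μ d * G (R d) ≤ c * G Finset.univ := by
  obtain ⟨a, ha, hle⟩ := exists_core_of_supermodular hG h0 Finset.univ
  calc ∑ d, μ d * G (R d)
    _ ≤ ∑ d, μ d * ∑ i ∈ R d, a i := Finset.sum_le_sum fun d _ =>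
      mul_le_mul_of_nonneg_left (hle _ (Finset.subset_univ _)) (hμ d)
    _ = ∑ i, ∑ d with i ∈ R d, μ d * a i := by
      simp only [Finset.mul_sum]
      exact Finset.sum_comm' (by simp)
    _ = c * G Finset.univ := by simp only [← Finset.sum_mul, hc, ← ha, Finset.mul_sum]

end Supermodular

section Demands

variable {ι : Type*} [DecidableEq ι] {K : ℕ}

/-- The set of messages selected by the first `m` entries of the demand vector `d`. -/
def requested (d : Fin K → ι) (m : ℕ) : Finset ι :=
  (Finset.univ.filter fun j : Fin K => (j : ℕ) < m).image d

lemma forall_mem_requested {d : Fin K → ι} {m : ℕ} {P : ι → Prop} :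
    (∀ i ∈ requested d m, P i) ↔ ∀ j : Fin K, (j : ℕ) < m → P (d j) := by
  simp [requested]

lemma requested_zero (d : Fin K → ι) : requested d 0 = ∅ := by
  simp [requested]

lemma requested_succ (d : Fin K → ι) (k : Fin K) :
    requested d (k + 1) = insert (d k) (requested d k) := by
  rw [requested, requested, ← Finset.image_insert]
  congr 1
  grind

theorem sum_uniformMass_mem_requested [Fintype ι] [Nonempty ι] {ℓ : ℕ} (hℓ : ℓ ≤ K) (i : ι) :
    ∑ d : Fin K → ι with i ∈ requested d ℓ, uniformMass (Fin K → ι) d =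
      1 - (1 - 1 / (Fintype.card ι : ℝ)) ^ ℓ := by
  have hmiss : (Finset.univ.filter fun d : Fin K → ι => i ∉ requested d ℓ) =
      Fintype.piFinset fun j : Fin K => if (j : ℕ) < ℓ then {i}ᶜ else Finset.univ := by
    ext d
    have hnot : i ∉ requested d ℓ ↔ ∀ j : Fin K, (j : ℕ) < ℓ → d j ≠ i := by
      rw [← forall_mem_requested (P := (· ≠ i))]
      grind
    simp only [Finset.mem_filter_univ, hnot, Fintype.mem_piFinset]
    refine forall_congr' fun j => ?_
    by_cases hj : (j : ℕ) < ℓ <;> simp [hj]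
  have hcompl : ∑ x ∈ ({i}ᶜ : Finset ι), uniformMass ι x = 1 - 1 / (Fintype.card ι : ℝ) := by
    have hsplit := Finset.sum_compl_add_sum {i} (uniformMass ι)
    rw [Finset.sum_singleton, sum_uniformMass] at hsplit
    exact eq_sub_of_add_eq hsplit
  have hmissSum : ∑ d : Fin K → ι with i ∉ requested d ℓ, uniformMass (Fin K → ι) d =
      (1 - 1 / (Fintype.card ι : ℝ)) ^ ℓ := by
    rw [hmiss, ← productMass_uniformMass, sum_piFinset_productMass]
    simp only [apply_ite fun t => ∑ x ∈ t, uniformMass ι x, hcompl, sum_uniformMass]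
    rw [Finset.prod_ite, Finset.prod_const, Finset.prod_const_one, mul_one,
      Fin.card_filter_val_lt, min_eq_right hℓ]
  rw [← hmissSum, ← sum_uniformMass (Fin K → ι), eq_sub_iff_add_eq]
  exact Finset.sum_filter_add_sum_filter_not _ _ _

lemma ite_some_none_eq_iff {κ : Type*} {V : κ → Type*} {P : κ → Prop} [DecidablePred P]
    {x y : ∀ k, V k} :
    ((fun k => if P k then some (x k) else none) = fun k => if P k then some (y k) else none) ↔
      ∀ k, P k → x k = y k := by
  rw [funext_iff]
  refine forall_congr' fun k => ?_
  by_cases hk : P k <;> simp [hk]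

variable [Fintype ι] {α : Type*} [Fintype α] [DecidableEq α] {p : (ι → α) → ℝ}

lemma cmi_request_le_mi_sub_mi (hp : ∀ w, 0 ≤ p w) {ν ρ : Type*} [DecidableEq ν] [DecidableEq ρ]
    {v : (ι → α) → ν} {r : (ι → α) → ρ} (hr : ∀ w w', v w = v w' → r w = r w')
    (d : Fin K → ι) (k : Fin K) :
    cmi p (fun w => w (d k)) r
        (fun w => fun j : Fin K => if (j : ℕ) < k then some (w (d j)) else none) ≤
      mi p v (requested d (k + 1)).restrict - mi p v (requested d k).restrict := by
  refine (cmi_le_cmi_of_factors hp _ hr _).trans_eq ?_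
  rw [cmi_eq_mi_sub_mi]
  congr 1 <;> refine mi_congr_right p v fun w w' => ?_
  · simp only [Prod.mk.injEq, ite_some_none_eq_iff, restrict_eq_restrict_iff, requested_succ,
      Finset.forall_mem_insert, forall_mem_requested]
  · simp only [ite_some_none_eq_iff, restrict_eq_restrict_iff, forall_mem_requested]

variable {V : Fin K → Type*} [∀ k, DecidableEq (V k)]

lemma sum_cmi_request_le_mi (hp : ∀ w, 0 ≤ p w) (hp1 : ∑ w, p w = 1)
    (g : ∀ k, (ι → α) → V k) {ℓ : ℕ} (hℓ : ℓ ≤ K) (d : Fin K → ι) :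
    ∑ k : Fin ℓ, cmi p (fun w => w (d (Fin.castLE hℓ k)))
        (fun w => fun i : Fin K => if (i : ℕ) ≤ k then some (g i w) else none)
        (fun w => fun j : Fin K => if (j : ℕ) < k then some (w (d j)) else none) ≤
      mi p (fun w => fun i : Fin ℓ => g (Fin.castLE hℓ i) w) (requested d ℓ).restrict := by
  set v : (ι → α) → ∀ i : Fin ℓ, V (Fin.castLE hℓ i) := fun w i => g (Fin.castLE hℓ i) w
  have hcaches (k : Fin ℓ) (w w' : ι → α) (h : v w = v w') :
      (fun i : Fin K => if (i : ℕ) ≤ k then some (g i w) else none) =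
        fun i : Fin K => if (i : ℕ) ≤ k then some (g i w') else none :=
    ite_some_none_eq_iff.2 fun i hi => congrFun h ⟨i, hi.trans_lt k.2⟩
  calc _ ≤ ∑ k : Fin ℓ, (mi p v (requested d (k + 1)).restrict
            - mi p v (requested d k).restrict) := Finset.sum_le_sum fun k _ =>
      cmi_request_le_mi_sub_mi hp (hcaches k) d (Fin.castLE hℓ k)
    _ = mi p v (requested d ℓ).restrict - mi p v (requested d 0).restrict := by
      rw [Fin.sum_univ_eq_sum_range (fun k => mi p v (requested d (k + 1)).restrict
        - mi p v (requested d k).restrict) ℓ,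
        Finset.sum_range_sub fun k => mi p v (requested d k).restrict]
    _ = mi p v (requested d ℓ).restrict := by
      rw [requested_zero, mi_of_subsingleton hp1 v (∅ : Finset ι).restrict, sub_zero]

variable [Nonempty ι] {q : ι → α → ℝ}

theorem sum_cmi_le_mul_ent (hq : ∀ i x, 0 ≤ q i x) (hq1 : ∀ i, ∑ x, q i x = 1)
    (g : ∀ k, (ι → α) → V k) {ℓ : ℕ} (hℓ : ℓ ≤ K) :
    ∑ k : Fin ℓ, cmi (fun ω : (ι → α) × (Fin K → ι) =>
          productMass q ω.1 * uniformMass (Fin K → ι) ω.2)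
        (fun ω => ω.1 (ω.2 (Fin.castLE hℓ k)))
        (fun ω => fun i : Fin K => if (i : ℕ) ≤ k then some (g i ω.1) else none)
        (fun ω => ((fun j : Fin K => if (j : ℕ) < k then some (ω.1 (ω.2 j)) else none), ω.2)) ≤
      (1 - (1 - 1 / (Fintype.card ι : ℝ)) ^ ℓ) *
        ent (productMass q) fun w => fun i : Fin ℓ => g (Fin.castLE hℓ i) w := by
  have hp := productMass_nonneg hq
  have hp1 := sum_productMass hq1
  set v : (ι → α) → ∀ i : Fin ℓ, V (Fin.castLE hℓ i) := fun w i => g (Fin.castLE hℓ i) w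
  have hempty : mi (productMass q) v (∅ : Finset ι).restrict = 0 := mi_of_subsingleton hp1 _ _
  have huniv : mi (productMass q) v (Finset.univ : Finset ι).restrict = ent (productMass q) v :=
    mi_of_injective _ _ fun w w' h => funext fun i =>
      restrict_eq_restrict_iff.1 h i (Finset.mem_univ i)
  simp only [cmi_prodMk_snd hp hp1]
  rw [Finset.sum_comm, ← huniv]
  simp only [← Finset.mul_sum]
  refine le_trans (Finset.sum_le_sum fun d _ => mul_le_mul_of_nonneg_left
    (sum_cmi_request_le_mi hp hp1 g hℓ d) (uniformMass_nonneg d)) ?_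
  exact sum_mul_le_of_supermodular (mi_productMass_restrict_supermodular hq hq1 v) hempty
    uniformMass_nonneg (fun d => requested d ℓ) (sum_uniformMass_mem_requested hℓ)

end Demands

theorem beta_bound_ii_general {ι α : Type*} [Fintype ι] [DecidableEq ι] [Nonempty ι] [Fintype α]
    [DecidableEq α] {q : ι → α → ℝ} {K : ℕ} {V : Fin K → Type*} [∀ k, Fintype (V k)]
    [∀ k, DecidableEq (V k)] {F M : ℝ} (hF : 0 < F) (hq : ∀ i x, 0 ≤ q i x)
    (hq1 : ∀ i, ∑ x, q i x = 1) (hV : ∀ k, (Fintype.card (V k) : ℝ) ≤ 2 ^ (F * M))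
    (g : ∀ k, (ι → α) → V k) {ℓ : ℕ} (hℓ : ℓ ≤ K) :
    ∑ k : Fin ℓ, (1 / F) * cmi (fun ω : (ι → α) × (Fin K → ι) =>
          productMass q ω.1 * uniformMass (Fin K → ι) ω.2)
        (fun ω => ω.1 (ω.2 (Fin.castLE hℓ k)))
        (fun ω => fun i : Fin K => if (i : ℕ) ≤ k then some (g i ω.1) else none)
        (fun ω => ((fun j : Fin K => if (j : ℕ) < k then some (ω.1 (ω.2 j)) else none), ω.2)) ≤
      (Fintype.card ι : ℝ) * (1 - (1 - 1 / (Fintype.card ι : ℝ)) ^ ℓ) *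
        ((ℓ : ℝ) * M / (Fintype.card ι : ℝ)) := by
  have hcard : (Fintype.card ι : ℝ) ≠ 0 := Nat.cast_ne_zero.2 Fintype.card_ne_zero
  have hhit : 0 ≤ 1 - (1 - 1 / (Fintype.card ι : ℝ)) ^ ℓ := by
    rw [← sum_uniformMass_mem_requested hℓ (Classical.arbitrary ι)]
    exact Finset.sum_nonneg fun d _ => uniformMass_nonneg d
  have hent := ent_pi_le (productMass_nonneg hq) (sum_productMass hq1)
    (fun i : Fin ℓ => hV (Fin.castLE hℓ i)) fun w i => g (Fin.castLE hℓ i) w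
  rw [Fintype.card_fin] at hent
  rw [← Finset.mul_sum]
  calc _ ≤ 1 / F * ((1 - (1 - 1 / (Fintype.card ι : ℝ)) ^ ℓ) * (ℓ * (F * M))) := by
        gcongr
        exact (sum_cmi_le_mul_ent hq hq1 g hℓ).trans (mul_le_mul_of_nonneg_left hent hhit)
    _ = _ := by field_simp

/-- **Lemma 4, part (ii).** The sample space is
`Ω = (Fin N → Fin (2^F)) × (Fin K → Fin N)` with the uniform distribution, so the
messages `W = ω.1` are i.i.d. uniform and the demand vector `D = ω.2` is uniform
on `{1,…,N}^K` and independent of the messages. With caches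
`V_k = g_k(W_1,…,W_N)` of size at most `⌊2^{F·M}⌋`, for every `ℓ ∈ {1,…,K}`:
`∑_{k=1}^{ℓ} β_k ≤ N·(1 − (1 − 1/N)^ℓ)·(ℓ·M/N)`, where
`β_k := (1/F)·I(W_{D_k}; V_1,…,V_k | W_{D_1},…,W_{D_{k−1}}, D)`
(below `k : Fin ℓ` is 0-based). -/
theorem beta_bound_ii
    (N K F : ℕ) (hN : 0 < N) (hK : 0 < K) (hF : 0 < F)
    (M : ℝ) (hM : 0 ≤ M)
    (V : Fin K → Type) [∀ k, Fintype (V k)] [∀ k, DecidableEq (V k)]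
    (hV : ∀ k, Fintype.card (V k) ≤ ⌊(2 : ℝ) ^ ((F : ℝ) * M)⌋₊)
    (g : ∀ k : Fin K, (Fin N → Fin (2 ^ F)) → V k)
    (ℓ : ℕ) (hℓ1 : 1 ≤ ℓ) (hℓ2 : ℓ ≤ K) :
    ∑ k : Fin ℓ, (1 / (F : ℝ)) *
        cmi (fun _ : (Fin N → Fin (2 ^ F)) × (Fin K → Fin N) =>
              (1 : ℝ) / (Fintype.card ((Fin N → Fin (2 ^ F)) × (Fin K → Fin N)) : ℝ))
          (fun ω => ω.1 (ω.2 (Fin.castLE hℓ2 k)))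
          (fun ω => fun i : Fin K =>
            if (i : ℕ) ≤ (k : ℕ) then some (g i ω.1) else none)
          (fun ω =>
            ((fun j : Fin K =>
                if (j : ℕ) < (k : ℕ) then some (ω.1 (ω.2 j)) else none), ω.2))
      ≤ (N : ℝ) * (1 - (1 - 1 / (N : ℝ)) ^ ℓ) * ((ℓ : ℝ) * M / (N : ℝ)) := by
  have : NeZero N := ⟨hN.ne'⟩
  have hβ := beta_bound_ii_general (Nat.cast_pos.2 hF) (fun _ : Fin N => uniformMass_nonneg)
    (fun _ => sum_uniformMass (Fin (2 ^ F)))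
    (fun k => (Nat.le_floor_iff (by positivity)).1 (hV k)) g hℓ2
  simp only [productMass_uniformMass, uniformMass_mul_uniformMass, Fintype.card_fin] at hβ
  exact hβ
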